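/- Let n ≥ 4 be an integer, let η be the admissible reactive profile, set q(z) = n (2κ z η(z) + η(z)²)^{n−1} (2κ z + 2 η(z)) and p₊ = (1 + √(1 + 4nδ(δ+1)))/2. Then the solution h₁ of h₁''(z) = q(z) h₁(z) with h₁(0) = 1 and h₁'(0) = 0 exists on all of [0,∞), is positive with h₁(x) ≥ 1 for every x ≥ 0, and there exists a constant d₁ > 0 such that x^{−p₊} h₁(x) → d₁ as x → ∞. -/

import Mathlib

noncomputable def kap : ℝ := 1 / Real.sqrt Real.pi

noncomputable def del (n : ℕ) : ℝ := ((n : ℝ) + 2) / ((n : ℝ) - 1)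

def IsReactiveProfile (n : ℕ) (η : ℝ → ℝ) : Prop :=
  ContDiffOn ℝ 2 η (Set.Ici 0) ∧
  (∀ z ∈ Set.Ici (0:ℝ), 0 < η z) ∧
  (∀ z ∈ Set.Ici (0:ℝ),
    derivWithin (derivWithin η (Set.Ici 0)) (Set.Ici 0) z
      = (2 * kap * z * η z + (η z) ^ 2) ^ n) ∧
  derivWithin η (Set.Ici 0) 0 = -kap ∧
  Filter.Tendsto η Filter.atTop (nhds 0)

/-- q(z) = n(2κzη(z)+η(z)²)^{n−1}(2κz+2η(z)). -/
noncomputable def qpot (n : ℕ) (η : ℝ → ℝ) (z : ℝ) : ℝ :=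
  (n : ℝ) * (2 * kap * z * η z + (η z) ^ 2) ^ (n - 1) * (2 * kap * z + 2 * η z)

/-- p₊ = (1 + √(1 + 4nδ(δ+1)))/2. -/
noncomputable def pplus (n : ℕ) : ℝ :=
  (1 + Real.sqrt (1 + 4 * (n : ℝ) * del n * (del n + 1))) / 2

open Set Filter Topology

lemma exp_int_bound {K c : ℝ} (hK : 0 < K) {f : ℝ → ℝ}
    (hb : ∀ s, 0 ≤ s → |f s| ≤ c * Real.exp (K * s)) {t : ℝ} (ht : 0 ≤ t) (hc : 0 ≤ c) :
    |∫ s in (0:ℝ)..t, f s| ≤ c / K * Real.exp (K * t) := by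
  have hder : ∀ s ∈ uIcc 0 t, HasDerivAt (fun s => c / K * Real.exp (K * s))
      (c * Real.exp (K * s)) s := by
    intro s _
    have h := (((hasDerivAt_id s).const_mul K).exp).const_mul (c / K)
    refine h.congr_deriv ?_
    simp only [id]
    field_simp
  have hint : IntervalIntegrable (fun s => c * Real.exp (K * s)) MeasureTheory.volume 0 t :=
    Continuous.intervalIntegrable (by fun_prop) _ _
  have h1 := intervalIntegral.integral_eq_sub_of_hasDerivAt hder hint
  have h2 := intervalIntegral.norm_integral_le_of_norm_le (f := f) ht
    (g := fun s => c * Real.exp (K * s)) (μ := MeasureTheory.volume)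
    (by filter_upwards with s hs using hb s hs.1.le) hint
  rw [h1] at h2
  simp only [Real.norm_eq_abs, mul_zero, Real.exp_zero, mul_one] at h2
  have : 0 ≤ c / K := by positivity
  linarith

lemma lin_exists (Q : ℝ → ℝ) (hQ : Continuous Q) (M : ℝ) (hQ0 : ∀ x, 0 ≤ Q x) (hQM : ∀ x, Q x ≤ M) :
    ∃ h h' : ℝ → ℝ, h 0 = 1 ∧ h' 0 = 0 ∧ (∀ x, HasDerivAt h (h' x) x) ∧
      (∀ x, 0 ≤ x → HasDerivAt h' (Q x * h x) x) ∧ Continuous h' ∧ (∀ x, 0 ≤ x → 1 ≤ h x) := by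
  have hM : 0 ≤ M := (hQ0 0).trans (hQM 0)
  set K : ℝ := M + 1 with hKdef
  have hK : 0 < K := by positivity
  have hMK : M / K / K ≤ 1 / 2 := by
    rw [div_div, div_le_iff₀ (by positivity)]; nlinarith
  let G : (ℝ → ℝ) → ℝ → ℝ := fun y t => ∫ s in (0:ℝ)..t, Q s * Real.exp (K * s) * y s
  let H : (ℝ → ℝ) → ℝ → ℝ := fun y x => ∫ t in (0:ℝ)..x, G y t
  have hG : ∀ y, Continuous y → ∀ x, HasDerivAt (G y) (Q x * Real.exp (K * x) * y x) x := by
    intro y hy x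
    have hc : Continuous (fun s => Q s * Real.exp (K * s) * y s) := by fun_prop
    exact intervalIntegral.integral_hasDerivAt_right (hc.intervalIntegrable _ _)
      (hc.stronglyMeasurableAtFilter _ _) hc.continuousAt
  have hGc : ∀ y, Continuous y → Continuous (G y) := fun y hy =>
    continuous_iff_continuousAt.2 fun x => (hG y hy x).continuousAt
  have hH : ∀ y, Continuous y → ∀ x, HasDerivAt (H y) (G y x) x := by
    intro y hy x
    have hc := hGc y hy
    exact intervalIntegral.integral_hasDerivAt_right (hc.intervalIntegrable _ _)
      (hc.stronglyMeasurableAtFilter _ _) hc.continuousAt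
  have hHc : ∀ y, Continuous y → Continuous (H y) := fun y hy =>
    continuous_iff_continuousAt.2 fun x => (hH y hy x).continuousAt
  have hbG : ∀ y : ℝ → ℝ, ∀ c, 0 ≤ c → (∀ s, |y s| ≤ c) → ∀ t, 0 ≤ t →
      |G y t| ≤ (M * c) / K * Real.exp (K * t) := by
    intro y c hc hy t ht
    refine exp_int_bound hK ?_ ht (by positivity)
    intro s hs
    rw [abs_mul, abs_mul, abs_of_nonneg (hQ0 s), abs_of_pos (Real.exp_pos _)]
    calc Q s * Real.exp (K * s) * |y s| ≤ M * Real.exp (K * s) * c := by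
          have := hQM s; have := hy s; have := hQ0 s; gcongr
      _ = _ := by ring
  have hbH : ∀ y : ℝ → ℝ, ∀ c, 0 ≤ c → (∀ s, |y s| ≤ c) → ∀ t, 0 ≤ t →
      |H y t| ≤ (1 / 2 * c) * Real.exp (K * t) := by
    intro y c hc hy t ht
    have := exp_int_bound hK (hbG y c hc hy) ht (by positivity)
    refine this.trans ?_
    gcongr
    calc M * c / K / K = M / K / K * c := by ring
      _ ≤ _ := by gcongr
  have hpos : ∀ y : ℝ → ℝ, (∀ s, 0 ≤ y s) → ∀ x, 0 ≤ x → 0 ≤ H y x := by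
    intro y hy x hx
    apply intervalIntegral.integral_nonneg hx
    intro t ht
    apply intervalIntegral.integral_nonneg ht.1
    intro s _
    have := hQ0 s; have := hy s; positivity
  let T0 : (ℝ → ℝ) → ℝ → ℝ := fun y x => Real.exp (-(K * max x 0)) * (1 + H y (max x 0))
  have hTc : ∀ y, Continuous y → Continuous (T0 y) := by
    intro y hy
    have := hHc y hy
    fun_prop
  have hTb : ∀ y : BoundedContinuousFunction ℝ ℝ, ∀ x, ‖T0 y x‖ ≤ 1 + 1/2 * ‖y‖ := by
    intro y x
    have h0 : 0 ≤ max x 0 := le_max_right _ _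
    have h1 := hbH y ‖y‖ (norm_nonneg _) (fun s => y.norm_coe_le_norm s) _ h0
    simp only [T0, Real.norm_eq_abs]
    rw [abs_mul, abs_of_pos (Real.exp_pos _), Real.exp_neg, inv_mul_le_iff₀ (Real.exp_pos _)]
    have h2 : 1 ≤ Real.exp (K * max x 0) := Real.one_le_exp (by positivity)
    have h3 := abs_add_le 1 (H y (max x 0))
    rw [abs_one] at h3
    nlinarith
  let T : BoundedContinuousFunction ℝ ℝ → BoundedContinuousFunction ℝ ℝ := fun y =>
    BoundedContinuousFunction.ofNormedAddCommGroup (T0 y) (hTc y y.continuous) _ (hTb y)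
  have hT : ContractingWith (1/2) T := by
    refine ⟨by norm_num, LipschitzWith.of_dist_le_mul fun y z => ?_⟩
    rw [BoundedContinuousFunction.dist_le (by positivity)]
    intro x
    have h0 : 0 ≤ max x 0 := le_max_right _ _
    have e1 : ∀ t, G y t - G z t = G (fun s => y s - z s) t := by
      intro t
      have := y.continuous
      have := z.continuous
      simp only [G]
      rw [← intervalIntegral.integral_sub]
      · congr 1; ext s; ring
      · exact Continuous.intervalIntegrable (by fun_prop) _ _
      · exact Continuous.intervalIntegrable (by fun_prop) _ _
    have e2 : ∀ t, H y t - H z t = H (fun s => y s - z s) t := by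
      intro t
      simp only [H]
      rw [← intervalIntegral.integral_sub]
      · simp_rw [e1]
      · exact (hGc y y.continuous).intervalIntegrable _ _
      · exact (hGc z z.continuous).intervalIntegrable _ _
    have h1 := hbH (fun s => y s - z s) (dist y z) dist_nonneg
      (fun s => by rw [← Real.dist_eq]; exact BoundedContinuousFunction.dist_coe_le_dist s) _ h0
    change dist (T0 y x) (T0 z x) ≤ _
    simp only [T0, Real.dist_eq]
    rw [← mul_sub, add_sub_add_left_eq_sub, e2, abs_mul, abs_of_pos (Real.exp_pos _), Real.exp_neg,
      inv_mul_le_iff₀ (Real.exp_pos _)]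
    refine h1.trans (le_of_eq ?_)
    push_cast
    ring
  obtain ⟨y, hy, hlim, -⟩ := hT.exists_fixedPoint 0 (edist_ne_top _ _)
  have hit : ∀ k : ℕ, ∀ x, 0 ≤ (T^[k] 0) x := by
    intro k
    induction k with
    | zero => intro x; simp
    | succ k ih =>
      intro x
      rw [Function.iterate_succ_apply']
      change 0 ≤ T0 _ x
      have := hpos _ ih (max x 0) (le_max_right _ _)
      simp only [T0]
      positivity
  have hy0 : ∀ x, 0 ≤ y x := by
    intro x
    have : Tendsto (fun k => (T^[k] 0) x) atTop (𝓝 (y x)) :=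
      (BoundedContinuousFunction.tendsto_iff_tendstoUniformly.1 hlim).tendsto_at x
    exact ge_of_tendsto' this (fun k => hit k x)
  have hyx : ∀ x, 0 ≤ x → Real.exp (K * x) * y x = 1 + H y x := by
    intro x hx
    have h1 : T0 y x = y x := by
      conv_rhs => rw [← hy.eq]
      rfl
    rw [← h1]
    simp only [T0, max_eq_left hx]
    rw [← mul_assoc, ← Real.exp_add]; simp
  refine ⟨fun x => 1 + H y x, G y, by simp [H], by simp [G], fun x => (hH y y.continuous x).const_add 1,
    fun x hx => ?_, hGc y y.continuous, fun x hx => ?_⟩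
  · refine (hG y y.continuous x).congr_deriv ?_
    change _ = Q x * (1 + H y x)
    rw [← hyx x hx]; ring
  · have := hpos y hy0 x hx
    simp only; linarith

lemma max_principle {D D' D'' : ℝ → ℝ} {a : ℝ} (hc : ContinuousOn D (Ici a)) (ha : D a ≤ 0)
    (hD : ∀ z, a < z → HasDerivAt D (D' z) z) (hD' : ∀ z, a < z → HasDerivAt D' (D'' z) z)
    (hlim : Tendsto D atTop (𝓝 0)) (hpos : ∀ z, a < z → 0 < D z → 0 < D'' z) :
    ∀ z, a ≤ z → D z ≤ 0 := by
  by_contra! hcon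
  obtain ⟨z1, hz1, hDz1⟩ := hcon
  obtain ⟨b, hb⟩ := (hlim.eventually_lt_const hDz1).exists_forall_of_atTop
  have hz1b : z1 ≤ max b z1 := le_max_right _ _
  obtain ⟨m, hm, hmax⟩ := (isCompact_Icc (a := a) (b := max b z1)).exists_isMaxOn
    ⟨z1, hz1, hz1b⟩ (hc.mono Icc_subset_Ici_self)
  have hmz : D z1 ≤ D m := hmax ⟨hz1, hz1b⟩
  have hall : ∀ z, a ≤ z → D z ≤ D m := by
    intro z hz
    by_cases h : z ≤ max b z1
    · exact hmax ⟨hz, h⟩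
    · exact (hb z ((le_max_left _ _).trans (not_le.1 h).le)).le.trans hmz
  have hDm : 0 < D m := hDz1.trans_le hmz
  have ham : a < m := by
    rcases eq_or_lt_of_le hm.1 with h | h
    · rw [← h] at hDm; linarith
    · exact h
  have hloc : IsLocalMax D m := by
    filter_upwards [Ioi_mem_nhds ham] with z hz using hall z (le_of_lt hz)
  have h0 : D' m = 0 := hloc.hasDerivAt_eq_zero (hD m ham)
  have h2 := hpos m ham hDm
  -- the derivative is positive just to the right of m
  have hev : ∀ᶠ z in 𝓝[>] m, 0 < D' z := by
    have := (hasDerivAt_iff_tendsto_slope.1 (hD' m ham)).eventually_const_lt h2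
    have h3 : ∀ᶠ z in 𝓝[>] m, 0 < slope D' m z :=
      this.filter_mono (nhdsWithin_mono _ (fun z hz => ne_of_gt hz))
    filter_upwards [h3, self_mem_nhdsWithin] with z hz hz2
    rw [slope_def_field, h0, sub_zero] at hz
    exact (div_pos_iff_of_pos_right (sub_pos.2 hz2)).1 hz
  obtain ⟨u, hu, hmu⟩ := (mem_nhdsGT_iff_exists_Ioc_subset).1 hev
  have hmono : StrictMonoOn D (Icc m u) := by
    apply strictMonoOn_of_deriv_pos (convex_Icc _ _)
      (hc.mono (fun z hz => ham.le.trans hz.1))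
    intro z hz
    rw [interior_Icc] at hz
    rw [(hD z (ham.trans hz.1)).deriv]
    exact hmu ⟨hz.1, hz.2.le⟩
  have := hmono ⟨le_rfl, le_of_lt hu⟩ ⟨le_of_lt hu, le_rfl⟩ hu
  have := hall u (ham.le.trans (le_of_lt hu))
  linarith

/-- an antitone on a half-line, bounded below function converges -/
lemma antitone_conv {f : ℝ → ℝ} {a c : ℝ} (hf : AntitoneOn f (Ici a)) (hb : ∀ z, a ≤ z → c ≤ f z) :
    ∃ l, Tendsto f atTop (𝓝 l) ∧ ∀ z, a ≤ z → l ≤ f z := by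
  have h1 : Antitone (fun z => f (max z a)) := fun x y hxy =>
    hf (mem_Ici.2 (le_max_right _ _)) (mem_Ici.2 (le_max_right _ _)) (max_le_max_right _ hxy)
  have h2 : BddBelow (range (fun z => f (max z a))) := ⟨c, by
    rintro _ ⟨z, rfl⟩; exact hb _ (le_max_right _ _)⟩
  refine ⟨_, (tendsto_atTop_ciInf h1 h2).congr' ?_, ?_⟩
  · filter_upwards [eventually_ge_atTop a] with z hz
    rw [max_eq_left hz]
  · intro z hz
    have := ciInf_le h2 z
    simpa [max_eq_left hz] using this

lemma antitone_of_deriv {f f' : ℝ → ℝ} {a : ℝ} (hf : ∀ z, a ≤ z → HasDerivAt f (f' z) z)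
    (h : ∀ z, a ≤ z → f' z ≤ 0) : AntitoneOn f (Ici a) := by
  apply antitoneOn_of_deriv_nonpos (convex_Ici a)
    (fun z hz => (hf z hz).continuousAt.continuousWithinAt)
  · intro z hz
    rw [interior_Ici] at hz
    exact (hf z (le_of_lt hz)).differentiableAt.differentiableWithinAt
  · intro z hz
    rw [interior_Ici] at hz
    rw [(hf z (le_of_lt hz)).deriv]; exact h z (le_of_lt hz)

lemma monotone_of_deriv {f f' : ℝ → ℝ} {a : ℝ} (hf : ∀ z, a ≤ z → HasDerivAt f (f' z) z)
    (h : ∀ z, a ≤ z → 0 ≤ f' z) : MonotoneOn f (Ici a) := by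
  have := antitone_of_deriv (f := fun z => - f z) (f' := fun z => - f' z) (a := a)
    (fun z hz => (hf z hz).neg) (fun z hz => by simpa using h z hz)
  intro x hx y hy hxy
  have := this hx hy hxy
  simpa using this

lemma ratio_conv {f f' f'' g g' g'' : ℝ → ℝ} {a m : ℝ} (ha : 0 < a) (hm : 0 < m)
    (hf : ∀ z, a ≤ z → HasDerivAt f (f' z) z) (hf' : ∀ z, a ≤ z → HasDerivAt f' (f'' z) z)
    (hg : ∀ z, a ≤ z → HasDerivAt g (g' z) z) (hg' : ∀ z, a ≤ z → HasDerivAt g' (g'' z) z)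
    (hf0 : ∀ z, a ≤ z → 0 ≤ f z) (hgm : ∀ z, a ≤ z → m * z ≤ g z)
    (hW : ∀ z, a ≤ z → f'' z * g z ≤ f z * g'' z) :
    ∃ l, Tendsto (fun z => f z / g z) atTop (𝓝 l) := by
  have hWa : AntitoneOn (fun z => f' z * g z - f z * g' z) (Ici a) := by
    apply antitone_of_deriv (f' := fun z => f'' z * g z - f z * g'' z)
    · intro z hz
      refine (((hf' z hz).mul (hg z hz)).sub ((hf z hz).mul (hg' z hz))).congr_deriv ?_
      ring
    · intro z hz; have := hW z hz; linarith
  set k := |f' a * g a - f a * g' a| / m ^ 2 with hk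
  have hanti : AntitoneOn (fun z => f z / g z + k * z⁻¹) (Ici a) := by
    apply antitone_of_deriv (f' := fun z => (f' z * g z - f z * g' z) / (g z)^2 + k * (-(z^2)⁻¹))
    · intro z hz
      have hz0 : 0 < z := ha.trans_le hz
      have hg0 : 0 < g z := (mul_pos hm hz0).trans_le (hgm z hz)
      exact ((hf z hz).div (hg z hz) hg0.ne').add ((hasDerivAt_inv hz0.ne').const_mul k)
    · intro z hz
      have hz0 : 0 < z := ha.trans_le hz
      have hmz := mul_pos hm hz0
      have h1 := hWa (mem_Ici.2 le_rfl) hz hz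
      simp only at h1
      have h2 := h1.trans (le_abs_self _)
      have h3 : (f' z * g z - f z * g' z) / (g z)^2 ≤ |f' a * g a - f a * g' a| / (m * z)^2 := by
        have := hgm z hz
        calc _ ≤ |f' a * g a - f a * g' a| / (g z)^2 := by gcongr
          _ ≤ _ := by gcongr
      have h4 : |f' a * g a - f a * g' a| / (m * z)^2 = k * (z^2)⁻¹ := by
        rw [hk]; field_simp
      linarith
  obtain ⟨l, hl, -⟩ := antitone_conv (c := 0) hanti (by
    intro z hz
    have hz0 : 0 < z := ha.trans_le hz
    have hg0 : 0 < g z := (mul_pos hm hz0).trans_le (hgm z hz)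
    have := hf0 z hz
    have : 0 ≤ k := by positivity
    positivity)
  refine ⟨l, ?_⟩
  have h5 : Tendsto (fun z : ℝ => k * z⁻¹) atTop (𝓝 0) := by
    simpa using tendsto_inv_atTop_zero.const_mul k
  simpa using hl.sub h5

lemma growth {q h h' : ℝ → ℝ} {p B z1 m : ℝ} (hp : 1 < p) (hB : 0 ≤ B) (hz1 : 1 ≤ z1) (hm : 0 < m)
    (hq : ∀ z, z1 ≤ z → |q z * z ^ 2 - p * (p - 1)| ≤ B / z)
    (hh : ∀ z, z1 ≤ z → HasDerivAt h (h' z) z) (hh' : ∀ z, z1 ≤ z → HasDerivAt h' (q z * h z) z)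
    (hmz : ∀ z, z1 ≤ z → m * z ≤ h z) :
    ∃ d, 0 < d ∧ Tendsto (fun x : ℝ => x ^ (-p) * h x) atTop (𝓝 d) := by
  set A := B / (p - 1) with hA
  have hp1 : 0 < p - 1 := by linarith
  have hA0 : 0 ≤ A := by positivity
  have hAB : A * (p - 1) = B := by rw [hA]; field_simp
  set z0 := max z1 A with hz0def
  have hz01 : 1 ≤ z0 := hz1.trans (le_max_left _ _)
  have hz0 : 0 < z0 := by linarith
  have hh0 : ∀ z, z0 ≤ z → 0 < h z := fun z hz =>
    (mul_pos hm (hz0.trans_le hz)).trans_le (hmz z ((le_max_left _ _).trans hz))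
  have r0 : ∀ z : ℝ, 0 < z → z ^ p = z ^ (p - 3) * z ^ 3 := by
    intro z hz
    rw [← Real.rpow_natCast z 3, ← Real.rpow_add hz]; congr 1; push_cast; ring
  have r1 : ∀ z : ℝ, 0 < z → z ^ (p - 1) = z ^ (p - 3) * z ^ 2 := by
    intro z hz
    rw [← Real.rpow_natCast z 2, ← Real.rpow_add hz]; congr 1; push_cast; ring
  have r2 : ∀ z : ℝ, 0 < z → z ^ (p - 2) = z ^ (p - 3) * z := by
    intro z hz
    nth_rewrite 3 [← Real.rpow_one z]
    rw [← Real.rpow_add hz]; congr 1; ring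
  have d0 : ∀ z : ℝ, 0 < z → HasDerivAt (fun z : ℝ => z ^ p) (p * z ^ (p - 1)) z := fun z hz =>
    Real.hasDerivAt_rpow_const (Or.inl hz.ne')
  have d1 : ∀ z : ℝ, 0 < z → HasDerivAt (fun z : ℝ => z ^ (p - 1)) ((p - 1) * z ^ (p - 2)) z := by
    intro z hz
    refine (Real.hasDerivAt_rpow_const (Or.inl hz.ne')).congr_deriv ?_
    congr 2; ring
  have d2 : ∀ z : ℝ, 0 < z → HasDerivAt (fun z : ℝ => z ^ (p - 2)) ((p - 2) * z ^ (p - 3)) z := by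
    intro z hz
    refine (Real.hasDerivAt_rpow_const (Or.inl hz.ne')).congr_deriv ?_
    congr 2; ring
  have key : ∀ z, z0 ≤ z → 0 < z ∧ A ≤ z ∧ 0 < z ^ (p - 3) ∧ z ≤ z ^ p ∧
      q z * z ^ 2 * z ≤ p * (p - 1) * z + B ∧ p * (p - 1) * z - B ≤ q z * z ^ 2 * z ∧
      q z * z ^ 2 ≤ p * (p - 1) + B / z ∧ p * (p - 1) - B / z ≤ q z * z ^ 2 := by
    intro z hz
    have hz' : 0 < z := hz0.trans_le hz
    have h1 := abs_le.1 (hq z ((le_max_left _ _).trans hz))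
    have h2 : B / z * z = B := by field_simp
    refine ⟨hz', (le_max_right _ _).trans hz, by positivity, ?_, ?_, ?_, by linarith, by linarith⟩
    · exact Real.self_le_rpow_of_one_le (hz01.trans hz) hp.le
    · nlinarith
    · nlinarith
  obtain ⟨l1, hl1⟩ := ratio_conv (f := h) (f' := h') (f'' := fun z => q z * h z)
    (g := fun z => 2 * z ^ p - A * z ^ (p - 1))
    (g' := fun z => 2 * (p * z ^ (p - 1)) - A * ((p - 1) * z ^ (p - 2)))
    (g'' := fun z => 2 * (p * ((p - 1) * z ^ (p - 2))) - A * ((p - 1) * ((p - 2) * z ^ (p - 3))))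
    (a := z0) (m := 1) hz0 one_pos
    (fun z hz => hh z ((le_max_left _ _).trans hz)) (fun z hz => hh' z ((le_max_left _ _).trans hz))
    (fun z hz => ((d0 z (key z hz).1).const_mul 2).sub ((d1 z (key z hz).1).const_mul A))
    (fun z hz => (((d1 z (key z hz).1).const_mul p).const_mul 2).sub
      (((d2 z (key z hz).1).const_mul (p - 1)).const_mul A))
    (fun z hz => (hh0 z hz).le)
    (by
      intro z hz
      obtain ⟨k1, k2, k3, k4, -⟩ := key z hz
      rw [one_mul]
      refine k4.trans ?_
      rw [r0 z k1, r1 z k1]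
      have : 0 ≤ z ^ (p - 3) * z ^ 2 * (z - A) := mul_nonneg (by positivity) (by linarith)
      nlinarith)
    (by
      intro z hz
      obtain ⟨k1, k2, k3, k4, k5, k6, k7, k8⟩ := key z hz
      have hhz := hh0 z hz
      rw [r0 z k1, r1 z k1, r2 z k1]
      have e : q z * h z * (2 * (z ^ (p - 3) * z ^ 3) - A * (z ^ (p - 3) * z ^ 2)) =
        h z * (z ^ (p - 3) * (q z * z ^ 2 * (2 * z - A))) := by ring
      have e2 : h z * (2 * (p * ((p - 1) * (z ^ (p - 3) * z))) -
          A * ((p - 1) * ((p - 2) * z ^ (p - 3)))) =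
        h z * (z ^ (p - 3) * (2 * p * (p - 1) * z - A * (p - 1) * (p - 2))) := by ring
      rw [e, e2]
      gcongr
      calc q z * z ^ 2 * (2 * z - A) ≤ (p * (p - 1) + B / z) * (2 * z - A) := by
            apply mul_le_mul_of_nonneg_right k7; linarith
        _ = 2 * p * (p - 1) * z - A * (p - 1) * p + 2 * B - B / z * A := by field_simp; ring
        _ ≤ _ := by
            have : 0 ≤ B / z * A := by positivity
            rw [hAB]; linarith)
  obtain ⟨l2, hl2⟩ := ratio_conv (f := fun z => z ^ p + A * z ^ (p - 1))
    (f' := fun z => p * z ^ (p - 1) + A * ((p - 1) * z ^ (p - 2)))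
    (f'' := fun z => p * ((p - 1) * z ^ (p - 2)) + A * ((p - 1) * ((p - 2) * z ^ (p - 3))))
    (g := h) (g' := h') (g'' := fun z => q z * h z)
    (a := z0) (m := m) hz0 hm
    (fun z hz => ((d0 z (key z hz).1)).add ((d1 z (key z hz).1).const_mul A))
    (fun z hz => ((d1 z (key z hz).1).const_mul p).add
      (((d2 z (key z hz).1).const_mul (p - 1)).const_mul A))
    (fun z hz => hh z ((le_max_left _ _).trans hz)) (fun z hz => hh' z ((le_max_left _ _).trans hz))
    (by intro z hz; have := (key z hz).1; positivity)
    (fun z hz => hmz z ((le_max_left _ _).trans hz))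
    (by
      intro z hz
      obtain ⟨k1, k2, k3, k4, k5, k6, k7, k8⟩ := key z hz
      have hhz := hh0 z hz
      rw [r0 z k1, r1 z k1, r2 z k1]
      have e : (z ^ (p - 3) * z ^ 3 + A * (z ^ (p - 3) * z ^ 2)) * (q z * h z) =
        h z * (z ^ (p - 3) * (q z * z ^ 2 * (z + A))) := by ring
      have e2 : (p * ((p - 1) * (z ^ (p - 3) * z)) +
          A * ((p - 1) * ((p - 2) * z ^ (p - 3)))) * h z =
        h z * (z ^ (p - 3) * (p * (p - 1) * z + A * (p - 1) * (p - 2))) := by ring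
      rw [e, e2]
      gcongr
      calc _ ≤ p * (p - 1) * z + A * (p - 1) * p - B - B / z * A := by
            have : B / z * A ≤ B := by
              rw [div_mul_eq_mul_div, div_le_iff₀ k1]; gcongr
            rw [hAB]; linarith
        _ = (p * (p - 1) - B / z) * (z + A) := by field_simp; ring
        _ ≤ _ := by
            apply mul_le_mul_of_nonneg_right k8; linarith)
  have hinv : Tendsto (fun z : ℝ => A * z⁻¹) atTop (𝓝 0) := by
    simpa using tendsto_inv_atTop_zero.const_mul A
  have hV : Tendsto (fun z : ℝ => z ^ (-p) * (2 * z ^ p - A * z ^ (p - 1))) atTop (𝓝 2) := by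
    have : Tendsto (fun z : ℝ => 2 - A * z⁻¹) atTop (𝓝 2) := by simpa using hinv.const_sub 2
    refine this.congr' ?_
    filter_upwards [eventually_gt_atTop 0] with z hz
    rw [Real.rpow_neg hz.le, Real.rpow_sub_one hz.ne']
    have : 0 < z ^ p := by positivity
    field_simp
  have hv : Tendsto (fun z : ℝ => z ^ (-p) * (z ^ p + A * z ^ (p - 1))) atTop (𝓝 1) := by
    have : Tendsto (fun z : ℝ => 1 + A * z⁻¹) atTop (𝓝 1) := by simpa using hinv.const_add 1
    refine this.congr' ?_
    filter_upwards [eventually_gt_atTop 0] with z hz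
    rw [Real.rpow_neg hz.le, Real.rpow_sub_one hz.ne']
    have : 0 < z ^ p := by positivity
    field_simp
  have hVpos : ∀ z, z0 ≤ z → 0 < 2 * z ^ p - A * z ^ (p - 1) := by
    intro z hz
    obtain ⟨k1, k2, k3, k4, -⟩ := key z hz
    rw [r0 z k1, r1 z k1]
    have : 0 < z ^ (p - 3) * z ^ 2 * (2 * z - A) := mul_pos (by positivity) (by linarith)
    nlinarith
  have hl1' : 0 ≤ l1 := by
    apply ge_of_tendsto hl1
    filter_upwards [eventually_ge_atTop z0] with z hz
    exact div_nonneg (hh0 z hz).le (hVpos z hz).le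
  have hmain : Tendsto (fun x : ℝ => x ^ (-p) * h x) atTop (𝓝 (2 * l1)) := by
    refine (hV.mul hl1).congr' ?_
    filter_upwards [eventually_ge_atTop z0] with z hz
    have := hVpos z hz
    field_simp
  have hprod : l2 * (2 * l1) = 1 := by
    apply tendsto_nhds_unique (hl2.mul hmain)
    refine hv.congr' ?_
    filter_upwards [eventually_ge_atTop z0] with z hz
    have := hh0 z hz
    field_simp
  refine ⟨2 * l1, ?_, hmain⟩
  rcases hl1'.eq_or_lt with h | h
  · rw [← h] at hprod; simp at hprod
  · linarith

lemma rpow_neg_deriv (s : ℝ) {z : ℝ} (hz : 0 < z) :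
    HasDerivAt (fun z : ℝ => z ^ (-s)) (-s * z ^ (-(s + 1))) z := by
  refine (Real.hasDerivAt_rpow_const (Or.inl hz.ne')).congr_deriv ?_
  congr 2; ring

lemma rpow_neg_shift (s : ℝ) {z : ℝ} (hz : 0 < z) : z ^ (-(s + 1)) = z ^ (-s) / z := by
  rw [show -(s + 1) = -s - 1 by ring, Real.rpow_sub_one hz.ne']

lemma decay_deriv {η e f : ℝ → ℝ} (hd : ∀ z, 0 < z → HasDerivAt η (e z) z)
    (hd' : ∀ z, 0 < z → HasDerivAt e (f z) z) (hf : ∀ z, 0 < z → 0 < f z)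
    (hpos : ∀ z, 0 < z → 0 < η z) (hlim : Tendsto η atTop (𝓝 0)) :
    (∀ z, 0 < z → e z ≤ 0) ∧ Tendsto (fun z => z * e z) atTop (𝓝 0) := by
  have hmono : ∀ x y, 0 < x → x ≤ y → e x ≤ e y := by
    intro x y hx hxy
    exact monotone_of_deriv (a := x) (fun z hz => hd' z (hx.trans_le hz))
      (fun z hz => (hf z (hx.trans_le hz)).le) (mem_Ici.2 le_rfl) hxy hxy
  have hneg : ∀ z, 0 < z → e z ≤ 0 := by
    intro z hz
    by_contra! hcon
    have h1 : MonotoneOn η (Ici z) := monotone_of_deriv (fun x hx => hd x (hz.trans_le hx))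
      (fun x hx => hcon.le.trans (hmono z x hz hx))
    have h2 : η z ≤ 0 := by
      apply ge_of_tendsto hlim
      filter_upwards [eventually_ge_atTop z] with x hx
      exact h1 (mem_Ici.2 le_rfl) hx hx
    have := hpos z hz
    linarith
  refine ⟨hneg, ?_⟩
  have hhalf : Tendsto (fun z : ℝ => -(2 * η (z / 2))) atTop (𝓝 0) := by
    have : Tendsto (fun z : ℝ => z / 2) atTop atTop := tendsto_id.atTop_div_const two_pos
    simpa using ((hlim.comp this).const_mul 2).neg
  refine tendsto_of_tendsto_of_tendsto_of_le_of_le' hhalf tendsto_const_nhds ?_ ?_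
  · filter_upwards [eventually_gt_atTop 0] with z hz
    obtain ⟨c, hc, hce⟩ := exists_hasDerivAt_eq_slope η e (show z / 2 < z by linarith)
      (fun x hx => (hd x (by have := hx.1; linarith)).continuousAt.continuousWithinAt)
      (fun x hx => hd x (by have := hx.1; linarith))
    have h1 := hmono c z (by have := hc.1; linarith) hc.2.le
    rw [hce, div_le_iff₀ (by linarith)] at h1
    have h2 := hpos z hz
    nlinarith
  · filter_upwards [eventually_gt_atTop 0] with z hz
    exact mul_nonpos_of_nonneg_of_nonpos hz.le (hneg z hz)

lemma five_pow (k : ℕ) {s : ℝ} (h0 : 0 ≤ s) (h1 : s ≤ 1) : (1 + 2 * s) ^ k ≤ 1 + 5 ^ k * s := by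
  induction k with
  | zero => simp; linarith
  | succ k ih =>
    have h5 : (1:ℝ) ≤ 5 ^ k := one_le_pow₀ (by norm_num)
    rw [pow_succ, pow_succ]
    have : (1 + 2 * s) ^ k * (1 + 2 * s) ≤ (1 + 5 ^ k * s) * (1 + 2 * s) := by gcongr
    have h2 : 5 ^ k * s * s ≤ 5 ^ k * s * 1 := by gcongr
    nlinarith

/-- the scaling function w is nonnegative and satisfies a linear equation -/
lemma w_props {η e : ℝ → ℝ} {κ δ : ℝ} {m : ℕ} (hκ : 0 < κ) (hδ1 : 1 < δ)
    (hδ : δ * m = m + 3) (hc : ContinuousOn η (Ici 0)) (hce : ContinuousOn e (Ici 0))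
    (hd : ∀ z, 0 < z → HasDerivAt η (e z) z)
    (hd' : ∀ z, 0 < z → HasDerivAt e ((2 * κ * z * η z + η z ^ 2) ^ (m + 1)) z)
    (hpos : ∀ z, 0 ≤ z → 0 < η z) (hlim : Tendsto η atTop (𝓝 0)) :
    ∃ w' : ℝ → ℝ,
      (∀ z, 0 < z → HasDerivAt (fun z => z * e z + δ * η z) (w' z) z) ∧
      (∀ z, 0 < z → HasDerivAt w'
        ((((m : ℝ) + 1) * (2 * κ * z * η z + η z ^ 2) ^ m * (2 * κ * z + 2 * η z)) *
          (z * e z + δ * η z) -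
          (2 * δ * (m + 1) - 2 - δ) * (2 * κ * z * η z + η z ^ 2) ^ m * η z ^ 2) z) ∧
      (∀ z, 0 ≤ z → 0 ≤ z * e z + δ * η z) ∧
      Tendsto (fun z => z * e z + δ * η z) atTop (𝓝 0) ∧ Tendsto e atTop (𝓝 0) := by
  have hF : ∀ z, 0 < z → 0 < 2 * κ * z * η z + η z ^ 2 := by
    intro z hz; have := hpos z hz.le; positivity
  obtain ⟨hneg, hze⟩ := decay_deriv hd hd' (fun z hz => pow_pos (hF z hz) _)
    (fun z hz => hpos z hz.le) hlim
  have h1 : ∀ z, 0 < z → HasDerivAt (fun z => z * e z + δ * η z)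
      (e z + z * (2 * κ * z * η z + η z ^ 2) ^ (m + 1) + δ * e z) z := by
    intro z hz
    refine (((hasDerivAt_id z).mul (hd' z hz)).add ((hd z hz).const_mul δ)).congr_deriv ?_
    simp
  have h2 : ∀ z, 0 < z → HasDerivAt
      (fun z => e z + z * (2 * κ * z * η z + η z ^ 2) ^ (m + 1) + δ * e z)
        ((((m : ℝ) + 1) * (2 * κ * z * η z + η z ^ 2) ^ m * (2 * κ * z + 2 * η z)) *
          (z * e z + δ * η z) -
          (2 * δ * (m + 1) - 2 - δ) * (2 * κ * z * η z + η z ^ 2) ^ m * η z ^ 2) z := by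
    intro z hz
    have hF' : HasDerivAt (fun z => 2 * κ * z * η z + η z ^ 2)
        (2 * κ * η z + 2 * κ * z * e z + 2 * η z * e z) z := by
      refine (((hasDerivAt_id z).const_mul (2 * κ)).mul (hd z hz)).add ((hd z hz).pow 2)
        |>.congr_deriv ?_
      simp
    refine (((hd' z hz).add ((hasDerivAt_id z).mul (hF'.pow (m + 1)))).add
      ((hd' z hz).const_mul δ)).congr_deriv ?_
    simp only [id, Nat.add_sub_cancel, Pi.pow_apply]
    push_cast
    set P := (2 * κ * z * η z + η z ^ 2) ^ m with hP
    rw [pow_succ, ← hP]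
    have e1 : (2:ℝ) + δ = δ * (m + 1) - (m + 1) := by linarith
    linear_combination (2 * κ * z * η z * P) * e1
  have hlimw : Tendsto (fun z => z * e z + δ * η z) atTop (𝓝 0) := by
    simpa using hze.add (hlim.const_mul δ)
  refine ⟨_, h1, h2, ?_, hlimw, ?_⟩
  · have hm := max_principle (a := 0) (D := fun z => -(z * e z + δ * η z))
      (D' := fun z => -(e z + z * (2 * κ * z * η z + η z ^ 2) ^ (m + 1) + δ * e z))
      (D'' := fun z => -((((m : ℝ) + 1) * (2 * κ * z * η z + η z ^ 2) ^ m * (2 * κ * z + 2 * η z)) *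
          (z * e z + δ * η z) -
          (2 * δ * (m + 1) - 2 - δ) * (2 * κ * z * η z + η z ^ 2) ^ m * η z ^ 2))
      (by fun_prop) (by have := hpos 0 le_rfl; simp; positivity)
      (fun z hz => (h1 z hz).neg) (fun z hz => (h2 z hz).neg) (by simpa using hlimw.neg)
      (by
        intro z hz hD
        have hη := hpos z hz.le
        have hFz := hF z hz
        have hg : 0 < 2 * δ * (m + 1) - 2 - δ := by linarith
        have : 0 < (2 * δ * (m + 1) - 2 - δ) * (2 * κ * z * η z + η z ^ 2) ^ m * η z ^ 2 := by
          positivity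
        have : 0 < (((m : ℝ) + 1) * (2 * κ * z * η z + η z ^ 2) ^ m * (2 * κ * z + 2 * η z)) *
          (-(z * e z + δ * η z)) := mul_pos (by positivity) hD
        linarith)
    intro z hz
    have := hm z hz
    linarith
  · have : Tendsto (fun z : ℝ => z⁻¹ * (z * e z)) atTop (𝓝 0) := by
      simpa using tendsto_inv_atTop_zero.mul hze
    refine this.congr' ?_
    filter_upwards [eventually_gt_atTop 0] with z hz
    field_simp

lemma profile_asymp {η e : ℝ → ℝ} {κ δ : ℝ} {m : ℕ} (hκ : 0 < κ) (hδ1 : 1 < δ)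
    (hδ : δ * m = m + 3) (hc : ContinuousOn η (Ici 0)) (hce : ContinuousOn e (Ici 0))
    (hd : ∀ z, 0 < z → HasDerivAt η (e z) z)
    (hd' : ∀ z, 0 < z → HasDerivAt e ((2 * κ * z * η z + η z ^ 2) ^ (m + 1)) z)
    (hpos : ∀ z, 0 ≤ z → 0 < η z) (hlim : Tendsto η atTop (𝓝 0)) :
    ∃ B z1 : ℝ, 0 ≤ B ∧ 1 ≤ z1 ∧ ∀ z, z1 ≤ z →
      |(((m : ℝ) + 1) * (2 * κ * z * η z + η z ^ 2) ^ m * (2 * κ * z + 2 * η z)) * z ^ 2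
        - ((m : ℝ) + 1) * δ * (δ + 1)| ≤ B / z := by
  obtain ⟨w', hw, hw', hw0, hwlim, helim⟩ := w_props hκ hδ1 hδ hc hce hd hd' hpos hlim
  have hm0 : m ≠ 0 := by rintro rfl; norm_num at hδ
  have hmpos : (0:ℝ) < m := by positivity
  set q : ℝ → ℝ := fun z => ((m : ℝ) + 1) * (2 * κ * z * η z + η z ^ 2) ^ m * (2 * κ * z + 2 * η z)
    with hq
  set y : ℝ → ℝ := fun z => z ^ δ * η z with hy
  have hy0 : ∀ z, 0 < z → 0 < y z := by
    intro z hz; have := hpos z hz.le; simp only [hy]; positivity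
  have hym : ∀ z, 0 < z → y z ^ m = z ^ (m + 3) * η z ^ m := by
    intro z hz
    simp only [hy]
    rw [mul_pow, ← Real.rpow_natCast (z ^ δ) m, ← Real.rpow_mul hz.le, hδ]
    congr 1
    exact_mod_cast Real.rpow_natCast z (m + 3)
  have hyd : ∀ z, 0 < z → HasDerivAt y (z ^ (δ - 1) * (z * e z + δ * η z)) z := by
    intro z hz
    refine ((Real.hasDerivAt_rpow_const (p := δ) (Or.inl hz.ne')).mul (hd z hz)).congr_deriv ?_
    have : z ^ δ = z ^ (δ - 1) * z := by
      rw [Real.rpow_sub_one hz.ne']; field_simp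
    rw [this]; ring
  have hymono : MonotoneOn y (Ici 1) := by
    refine monotone_of_deriv (fun z hz => hyd z (by linarith)) (fun z hz => ?_)
    have hz0 : 0 < z := by linarith
    have := hw0 z hz0.le
    positivity
  -- basic lower bounds
  have hq0 : ∀ z, 0 < z → 0 < q z := by
    intro z hz; have := hpos z hz.le; simp only [hq]; positivity
  have hqlow : ∀ z, 0 < z → ((m:ℝ) + 1) * (2 * κ) ^ (m + 1) * y z ^ m ≤ q z * z ^ 2 := by
    intro z hz
    have hη := hpos z hz.le
    rw [hym z hz]
    calc _ = ((m:ℝ) + 1) * (2 * κ * z * η z) ^ m * (2 * κ * z) * z ^ 2 := by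
            simp only [mul_pow]; ring
      _ ≤ _ := by
            simp only [hq]
            gcongr
            · nlinarith [sq_nonneg (η z)]
            · linarith
  have hFlow : ∀ z, 0 < z → (2 * κ) ^ (m + 1) * y z ^ m * η z ≤
      (2 * κ * z * η z + η z ^ 2) ^ (m + 1) * z ^ 2 := by
    intro z hz
    have hη := hpos z hz.le
    rw [hym z hz]
    calc _ = (2 * κ * z * η z) ^ (m + 1) * z ^ 2 := by
            simp only [mul_pow]; ring
      _ ≤ _ := by
            gcongr
            nlinarith [sq_nonneg (η z)]
  -- the barrier
  have hr : ∀ z : ℝ, 0 < z → HasDerivAt (fun z : ℝ => z ^ (-(δ + 1)))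
    (-(δ + 1) * z ^ (-(δ + 2))) z := by
    intro z hz
    refine (rpow_neg_deriv (δ + 1) hz).congr_deriv ?_
    congr 3; ring
  have hr' : ∀ z : ℝ, 0 < z → HasDerivAt (fun z : ℝ => -(δ + 1) * z ^ (-(δ + 2)))
    ((δ + 1) * (δ + 2) * (z ^ (-(δ + 1)) / z ^ 2)) z := by
    intro z hz
    refine ((rpow_neg_deriv (δ + 2) hz).const_mul (-(δ + 1))).congr_deriv ?_
    rw [rpow_neg_shift _ hz, show δ + 2 = δ + 1 + 1 by ring, rpow_neg_shift _ hz]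
    field_simp
  have hrlim : Tendsto (fun z : ℝ => z ^ (-(δ + 1))) atTop (𝓝 0) :=
    tendsto_rpow_neg_atTop (by linarith)
  have hrs : ∀ z : ℝ, 0 < z → z ^ δ * z ^ (-(δ + 1)) = z⁻¹ := by
    intro z hz
    rw [← Real.rpow_add hz, show δ + -(δ + 1) = -1 by ring, Real.rpow_neg_one]
  have hrs1 : ∀ z : ℝ, 0 < z → z ^ (δ + 1) * z ^ (-(δ + 1)) = 1 := by
    intro z hz
    rw [← Real.rpow_add hz, show δ + 1 + -(δ + 1) = 0 by ring, Real.rpow_zero]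
  set M := (δ + 1) * (δ + 2) with hMdef
  have hM : 0 < M := by positivity
  -- boundedness of y
  have hbd : ∃ R, ∀ z, 1 ≤ z → y z ≤ R := by
    by_contra! hcon
    have hev : ∃ a, 1 ≤ a ∧ ∀ z, a ≤ z → M < (2 * κ) ^ (m + 1) * y z ^ m := by
      obtain ⟨a, ha, hya⟩ := hcon (max 1 (M / (2 * κ) ^ (m + 1)))
      refine ⟨a, ha, fun z hz => ?_⟩
      have h1 : y a ≤ y z := hymono ha (ha.trans hz) hz
      have h2 : 1 ≤ y z := (le_max_left _ _).trans (hya.le.trans h1)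
      have h3 : M / (2 * κ) ^ (m + 1) < y z := (le_max_right _ _).trans_lt (hya.trans_le h1)
      rw [div_lt_iff₀ (by positivity)] at h3
      have h4 : y z ≤ y z ^ m := le_self_pow₀ h2 hm0
      have : 0 < (2 * κ) ^ (m + 1) := by positivity
      nlinarith
    obtain ⟨a, ha, haM⟩ := hev
    have ha0 : 0 < a := by linarith
    set B := η a * a ^ (δ + 1) with hB
    have hB0 : 0 < B := by have := hpos a ha0.le; positivity
    have hmax := max_principle (a := a) (D := fun z => η z - B * z ^ (-(δ + 1)))
      (D' := fun z => e z - B * (-(δ + 1) * z ^ (-(δ + 2))))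
      (D'' := fun z => (2 * κ * z * η z + η z ^ 2) ^ (m + 1) - B * (M * (z ^ (-(δ + 1)) / z ^ 2)))
      (fun z hz => ((hd z (ha0.trans_le hz)).sub
        ((hr z (ha0.trans_le hz)).const_mul B)).continuousAt.continuousWithinAt)
      (by
        have := hrs1 a ha0
        have : B * a ^ (-(δ + 1)) = η a := by rw [hB, mul_assoc, this, mul_one]
        linarith)
      (fun z hz => (hd z (ha0.trans hz)).sub ((hr z (ha0.trans hz)).const_mul B))
      (fun z hz => (hd' z (ha0.trans hz)).sub ((hr' z (ha0.trans hz)).const_mul B))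
      (by simpa using hlim.sub (hrlim.const_mul B))
      (by
        intro z hz hD
        have hz0 : 0 < z := ha0.trans hz
        have h1 := hFlow z hz0
        have h2 := haM z hz.le
        have hη := hpos z hz0.le
        have h3 : M * η z < (2 * κ) ^ (m + 1) * y z ^ m * η z := by gcongr
        have h4 : M * (B * z ^ (-(δ + 1))) < M * η z := by
          apply mul_lt_mul_of_pos_left _ hM; linarith
        have h5 : B * (M * (z ^ (-(δ + 1)) / z ^ 2)) = M * (B * z ^ (-(δ + 1))) / z ^ 2 := by ring
        rw [h5, sub_pos, div_lt_iff₀ (by positivity)]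
        linarith)
    obtain ⟨z2, hz2, hyz2⟩ := hcon B
    have hz3 : y z2 ≤ y (max z2 a) := hymono hz2 (hz2.trans (le_max_left _ _)) (le_max_left _ _)
    have hz4 : 1 ≤ max z2 a := hz2.trans (le_max_left _ _)
    have hz5 : 0 < max z2 a := by linarith
    have h6 := hmax (max z2 a) (le_max_right _ _)
    have h7 : y (max z2 a) ≤ B * (max z2 a)⁻¹ := by
      rw [← hrs _ hz5]
      simp only [hy]
      have : (max z2 a) ^ δ * η (max z2 a) ≤ (max z2 a) ^ δ * (B * (max z2 a) ^ (-(δ + 1))) := by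
        gcongr; linarith
      linarith
    have h8 : (max z2 a)⁻¹ ≤ 1 := inv_le_one_of_one_le₀ hz4
    nlinarith
  obtain ⟨R, hR⟩ := hbd
  -- limit of y
  obtain ⟨C, hyC, hyle⟩ : ∃ C, Tendsto y atTop (𝓝 C) ∧ ∀ z, 1 ≤ z → y z ≤ C := by
    obtain ⟨l, h1, h2⟩ := antitone_conv (f := fun z => - y z) (a := 1) (c := -R)
      (fun a ha b hb hab => neg_le_neg (hymono ha hb hab)) (fun z hz => neg_le_neg (hR z hz))
    refine ⟨-l, by simpa using h1.neg, fun z hz => ?_⟩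
    have := h2 z hz
    linarith
  have hC : 0 < C := (hy0 1 one_pos).trans_le (hyle 1 le_rfl)
  -- the value of C
  have hCval : (2 * κ) ^ (m + 1) * C ^ m = δ * (δ + 1) := by
    have hs : Tendsto (fun z => 1 + η z * z⁻¹ / (2 * κ)) atTop (𝓝 1) := by
      simpa using ((hlim.mul tendsto_inv_atTop_zero).div_const (2 * κ)).const_add 1
    have t0 : Tendsto (fun z => (2 * κ) ^ (m + 1) * y z ^ (m + 1) * (1 + η z * z⁻¹ / (2 * κ)) ^ (m + 1))
        atTop (𝓝 ((2 * κ) ^ (m + 1) * C ^ (m + 1))) := by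
      simpa using ((hyC.pow (m + 1)).const_mul ((2 * κ) ^ (m + 1))).mul (hs.pow (m + 1))
    have t1 : Tendsto (fun z => (2 * κ * z * η z + η z ^ 2) ^ (m + 1) /
        (-(δ + 1) * z ^ (-(δ + 1 + 1)))) atTop (𝓝 ((2 * κ) ^ (m + 1) * C ^ (m + 1) / (-(δ + 1)))) := by
      refine (t0.div_const (-(δ + 1))).congr' ?_
      filter_upwards [eventually_gt_atTop 0] with z hz
      have e1 : (2 * κ * z * η z + η z ^ 2) = (2 * κ) * (1 + η z * z⁻¹ / (2 * κ)) * (z * η z) := by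
        field_simp
      rw [e1, rpow_neg_shift _ hz, rpow_neg_shift _ hz, Real.rpow_neg hz.le, pow_succ (y z), hym z hz,
        mul_pow, mul_pow, mul_pow]
      simp only [hy]
      have : 0 < z ^ δ := by positivity
      field_simp
      simp only [mul_pow]
      ring
    have t2 : Tendsto (fun z => e z / z ^ (-(δ + 1))) atTop
        (𝓝 ((2 * κ) ^ (m + 1) * C ^ (m + 1) / (-(δ + 1)))) := by
      refine HasDerivAt.lhopital_zero_atTop
        ((eventually_gt_atTop 0).mono hd')
        ((eventually_gt_atTop 0).mono fun z hz => rpow_neg_deriv (δ + 1) hz) ?_ helim hrlim t1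
      filter_upwards [eventually_gt_atTop 0] with z hz
      have : 0 < z ^ (-(δ + 1 + 1)) := by positivity
      exact mul_ne_zero (by linarith) this.ne'
    have t3 : Tendsto (fun z => e z / (-δ * z ^ (-(δ + 1)))) atTop
        (𝓝 ((2 * κ) ^ (m + 1) * C ^ (m + 1) / (-(δ + 1)) / (-δ))) := by
      refine (t2.div_const (-δ)).congr ?_
      intro z
      rw [div_div, mul_comm]
    have t4 : Tendsto (fun z => η z / z ^ (-δ)) atTop
        (𝓝 ((2 * κ) ^ (m + 1) * C ^ (m + 1) / (-(δ + 1)) / (-δ))) := by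
      refine HasDerivAt.lhopital_zero_atTop
        ((eventually_gt_atTop 0).mono hd)
        ((eventually_gt_atTop 0).mono fun z hz => rpow_neg_deriv δ hz) ?_ hlim
        (tendsto_rpow_neg_atTop (by linarith)) t3
      filter_upwards [eventually_gt_atTop 0] with z hz
      have : 0 < z ^ (-(δ + 1)) := by positivity
      exact mul_ne_zero (by linarith) this.ne'
    have t5 := tendsto_nhds_unique_of_eventuallyEq hyC t4 (by
      filter_upwards [eventually_gt_atTop 0] with z hz
      rw [Real.rpow_neg hz.le]
      simp only [hy]
      field_simp)
    have hδ0 : δ ≠ 0 := by linarith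
    have hδ2 : δ + 1 ≠ 0 := by linarith
    rw [div_div, neg_mul_neg, eq_div_iff (mul_ne_zero hδ2 hδ0), pow_succ C] at t5
    have : C * (δ * (δ + 1)) = C * ((2 * κ) ^ (m + 1) * C ^ m) := by linarith
    exact (mul_left_cancel₀ hC.ne' this).symm
  set a0 := ((m:ℝ) + 1) * δ * (δ + 1) with ha0def
  have ha0C : ((m:ℝ) + 1) * (2 * κ) ^ (m + 1) * C ^ m = a0 := by
    rw [mul_assoc, hCval, ha0def]; ring
  have hMa0 : M < a0 := by
    have : δ + 2 < ((m:ℝ) + 1) * δ := by nlinarith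
    rw [hMdef, ha0def]; nlinarith
  have ha0pos : 0 < a0 := hM.trans hMa0
  obtain ⟨μ, hMμ, hμa⟩ := exists_between hMa0
  have hμ0 : 0 < μ := hM.trans hMμ
  obtain ⟨a1, ha1⟩ : ∃ a, ∀ z, a ≤ z → μ < ((m:ℝ) + 1) * (2 * κ) ^ (m + 1) * y z ^ m := by
    have := (hyC.pow m).const_mul (((m:ℝ) + 1) * (2 * κ) ^ (m + 1))
    rw [ha0C] at this
    exact (this.eventually_const_lt hμa).exists_forall_of_atTop
  set a := max a1 1 with ha_def
  have ha1' : 1 ≤ a := le_max_right _ _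
  have ha0 : 0 < a := by linarith
  set θ := 1 - M / μ with hθdef
  have hθ : 0 < θ := by rw [hθdef, sub_pos, div_lt_one hμ0]; exact hMμ
  obtain ⟨B, hB0, hB1, hB2⟩ : ∃ B, 0 ≤ B ∧ (a * e a + δ * η a) * a ^ (δ + 1) ≤ B ∧
      δ / κ * C ^ 2 ≤ B * θ := by
    refine ⟨max ((a * e a + δ * η a) * a ^ (δ + 1)) (δ / κ * C ^ 2 / θ), ?_, le_max_left _ _, ?_⟩
    · exact (by positivity : 0 ≤ δ / κ * C ^ 2 / θ).trans (le_max_right _ _)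
    · rw [← div_le_iff₀ hθ]; exact le_max_right _ _
  have hηC : ∀ z, 1 ≤ z → η z * z ^ δ ≤ C := fun z hz => by
    rw [mul_comm]; exact hyle z hz
  have hmax := max_principle (a := a) (D := fun z => (z * e z + δ * η z) - B * z ^ (-(δ + 1)))
      (D' := fun z => w' z - B * (-(δ + 1) * z ^ (-(δ + 2))))
      (D'' := fun z => (q z * (z * e z + δ * η z) -
          (2 * δ * (m + 1) - 2 - δ) * (2 * κ * z * η z + η z ^ 2) ^ m * η z ^ 2)
           - B * (M * (z ^ (-(δ + 1)) / z ^ 2)))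
      (fun z hz => ((hw z (ha0.trans_le hz)).sub
        ((hr z (ha0.trans_le hz)).const_mul B)).continuousAt.continuousWithinAt)
      (by
        have h1 := hrs1 a ha0
        have h2 : 0 < a ^ (-(δ + 1)) := by positivity
        have h3 := mul_le_mul_of_nonneg_right hB1 h2.le
        rw [mul_assoc, h1, mul_one] at h3
        linarith)
      (fun z hz => (hw z (ha0.trans hz)).sub ((hr z (ha0.trans hz)).const_mul B))
      (fun z hz => (hw' z (ha0.trans hz)).sub ((hr' z (ha0.trans hz)).const_mul B))
      (by simpa using hwlim.sub (hrlim.const_mul B))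
      (by
        intro z hz hD
        have hz0 : 0 < z := ha0.trans hz
        have hz1 : 1 ≤ z := ha1'.trans hz.le
        have hη := hpos z hz0.le
        have hqz := hq0 z hz0
        have hqμ : μ ≤ q z * z ^ 2 :=
          (ha1 z ((le_max_left _ _).trans hz.le)).le.trans (hqlow z hz0)
        set r := z ^ (-(δ + 1)) with hrdef
        have hr0 : 0 < r := by positivity
        -- bound of g
        have hg1 : (2 * δ * (m + 1) - 2 - δ) * (2 * κ * z * η z + η z ^ 2) ^ m * η z ^ 2 ≤
            q z * (δ / κ * (η z ^ 2 / z)) := by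
          calc _ ≤ (2 * δ * (m + 1)) * (2 * κ * z * η z + η z ^ 2) ^ m * η z ^ 2 := by
                gcongr; linarith
            _ = (((m : ℝ) + 1) * (2 * κ * z * η z + η z ^ 2) ^ m * (2 * κ * z)) *
                  (δ / κ * (η z ^ 2 / z)) := by field_simp
            _ ≤ _ := by
                simp only [hq]
                gcongr
                linarith
        have hg2 : η z ^ 2 / z ≤ C ^ 2 * r := by
          have h1 : 1 ≤ z ^ δ := Real.one_le_rpow hz1 (by linarith)
          have h2 := hηC z hz1
          have h3 : η z ≤ C := le_trans (le_mul_of_one_le_right hη.le h1) h2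
          have h4 := hrs z hz0
          calc η z ^ 2 / z = η z * (η z * z ^ δ) * r := by
                rw [div_eq_mul_inv, ← h4]; ring
            _ ≤ C * C * r := by gcongr
            _ = _ := by ring
        have hg3 : (2 * δ * (m + 1) - 2 - δ) * (2 * κ * z * η z + η z ^ 2) ^ m * η z ^ 2 ≤
            q z * (B * θ * r) := by
          refine hg1.trans (mul_le_mul_of_nonneg_left ?_ hqz.le)
          calc δ / κ * (η z ^ 2 / z) ≤ δ / κ * (C ^ 2 * r) := by gcongr
            _ = δ / κ * C ^ 2 * r := by ring
            _ ≤ _ := by gcongr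
        have hg4 : B * (M * (r / z ^ 2)) ≤ q z * (B * (1 - θ) * r) := by
          have h1 : 1 / z ^ 2 ≤ q z / μ := by
            rw [div_le_div_iff₀ (by positivity) hμ0]; linarith
          calc B * (M * (r / z ^ 2)) = B * M * r * (1 / z ^ 2) := by ring
            _ ≤ B * M * r * (q z / μ) := by gcongr
            _ = _ := by rw [hθdef]; ring
        have hg5 : 0 < q z * ((z * e z + δ * η z) - B * r) := mul_pos hqz hD
        have hg6 : q z * ((z * e z + δ * η z) - B * r) = q z * (z * e z + δ * η z) -
          q z * (B * θ * r) - q z * (B * (1 - θ) * r) := by ring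
        linarith)
  -- rate
  have hanti : AntitoneOn (fun z => y z + B * z⁻¹) (Ici a) := by
    apply antitone_of_deriv
      (f' := fun z => z ^ (δ - 1) * (z * e z + δ * η z) + B * (-(z ^ 2)⁻¹))
    · intro z hz
      have hz0 : 0 < z := ha0.trans_le hz
      exact (hyd z hz0).add ((hasDerivAt_inv hz0.ne').const_mul B)
    · intro z hz
      have hz0 : 0 < z := ha0.trans_le hz
      have h1 := hmax z hz
      have h2 : z ^ (δ - 1) * (z * e z + δ * η z) ≤ z ^ (δ - 1) * (B * z ^ (-(δ + 1))) := by
        gcongr; linarith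
      have h3 : z ^ (δ - 1) * (B * z ^ (-(δ + 1))) = B * (z ^ 2)⁻¹ := by
        rw [Real.rpow_sub_one hz0.ne']
        calc _ = B * (z ^ δ * z ^ (-(δ + 1))) / z := by ring
          _ = _ := by rw [hrs z hz0]; field_simp
      linarith
  have hrate : ∀ z, a ≤ z → C - B / z ≤ y z := by
    intro z hz
    have hl : Tendsto (fun z => y z + B * z⁻¹) atTop (𝓝 C) := by
      simpa using hyC.add (tendsto_inv_atTop_zero.const_mul B)
    have : C ≤ y z + B * z⁻¹ := by
      apply le_of_tendsto hl
      filter_upwards [eventually_ge_atTop z] with x hx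
      exact hanti hz (hz.trans hx) hx
    rw [div_eq_mul_inv]; linarith
  set z1 := max a (C / (2 * κ)) with hz1def
  refine ⟨max (a0 * m * B / C) (a0 * 5 ^ (m + 1) * (C / (2 * κ))), z1, ?_, ?_, ?_⟩
  · exact (by positivity : 0 ≤ a0 * m * B / C).trans (le_max_left _ _)
  · exact ha1'.trans (le_max_left _ _)
  · intro z hz
    have hza : a ≤ z := (le_max_left _ _).trans hz
    have hzC : C / (2 * κ) ≤ z := (le_max_right _ _).trans hz
    have hz0 : 0 < z := ha0.trans_le hza
    have hz1 : 1 ≤ z := ha1'.trans hza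
    have hη := hpos z hz0.le
    change |q z * z ^ 2 - a0| ≤ _
    rw [abs_le]
    have hyp := hy0 z hz0
    constructor
    · have h1 := hqlow z hz0
      have h2 : 1 + (m:ℝ) * (y z / C - 1) ≤ (1 + (y z / C - 1)) ^ m := by
        apply one_add_mul_le_pow
        have : 0 < y z / C := by positivity
        linarith
      rw [add_sub_cancel, div_pow] at h2
      have h3 : ((m:ℝ) + 1) * (2 * κ) ^ (m + 1) * y z ^ m = a0 * (y z ^ m / C ^ m) := by
        rw [← ha0C]; field_simp
      have h4 : -(B / z / C) ≤ y z / C - 1 := by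
        have := hrate z hza
        have : (C - B / z) / C ≤ y z / C := by gcongr
        rw [sub_div, div_self hC.ne'] at this
        linarith
      have h5 : a0 * (1 + (m:ℝ) * (-(B / z / C))) ≤ a0 * (y z ^ m / C ^ m) := by
        gcongr
        refine le_trans ?_ h2
        gcongr
      have h6 : a0 * (1 + (m:ℝ) * (-(B / z / C))) = a0 - (a0 * m * B / C) / z := by
        field_simp; ring
      have h7 : (a0 * m * B / C) / z ≤
        max (a0 * m * B / C) (a0 * 5 ^ (m + 1) * (C / (2 * κ))) / z := by
        gcongr; exact le_max_left _ _
      linarith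
    · set s := η z / (2 * κ * z) with hs
      have hηle : η z ≤ C := by
        have h1 : 1 ≤ z ^ δ := Real.one_le_rpow hz1 (by linarith)
        exact le_trans (le_mul_of_one_le_right hη.le h1) (hηC z hz1)
      have hs0 : 0 ≤ s := by positivity
      have hs1 : s ≤ C / (2 * κ) / z := by
        rw [hs, div_div]; gcongr
      have hs2 : s ≤ 1 := hs1.trans (by rw [div_le_one hz0]; exact hzC)
      have e1 : q z * z ^ 2 = ((m:ℝ) + 1) * (2 * κ) ^ (m + 1) * y z ^ m *
          ((1 + s) ^ m * (1 + 2 * s)) := by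
        have e2 : 2 * κ * z * η z + η z ^ 2 = (2 * κ) * z * η z * (1 + s) := by
          rw [hs]; field_simp
        have e3 : 2 * κ * z + 2 * η z = 2 * κ * z * (1 + 2 * s) := by
          rw [hs]; field_simp
        simp only [hq]
        rw [e2, e3, hym z hz0]
        simp only [mul_pow]
        ring
      have h1 : q z * z ^ 2 ≤ a0 * (1 + 5 ^ (m + 1) * s) := by
        rw [e1, ← ha0C]
        have := hyle z hz1
        have h2 : (1 + s) ^ m * (1 + 2 * s) ≤ 1 + 5 ^ (m + 1) * s := by
          refine le_trans ?_ (five_pow (m + 1) hs0 hs2)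
          rw [pow_succ]
          gcongr
          linarith
        gcongr
      have h2 : a0 * (1 + 5 ^ (m + 1) * s) ≤ a0 + (a0 * 5 ^ (m + 1) * (C / (2 * κ))) / z := by
        have : a0 * (1 + 5 ^ (m + 1) * s) ≤ a0 * (1 + 5 ^ (m + 1) * (C / (2 * κ) / z)) := by gcongr
        refine this.trans (le_of_eq ?_)
        ring
      have h7 : (a0 * 5 ^ (m + 1) * (C / (2 * κ))) / z ≤
        max (a0 * m * B / C) (a0 * 5 ^ (m + 1) * (C / (2 * κ))) / z := by
        gcongr; exact le_max_right _ _
      linarith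

lemma pplus_props {a p : ℝ} (ha : 0 < a) (hp : p = (1 + Real.sqrt (1 + 4 * a)) / 2) :
    1 < p ∧ p * (p - 1) = a := by
  have h1 : 1 < Real.sqrt (1 + 4 * a) := by
    rw [Real.lt_sqrt (by norm_num)]; linarith
  have h2 := Real.sq_sqrt (show 0 ≤ 1 + 4 * a by linarith)
  constructor
  · rw [hp]; linarith
  · rw [hp]; linarith

theorem homogeneous_solution_growth (n : ℕ) (hn : 4 ≤ n)
    (η : ℝ → ℝ) (hη : IsReactiveProfile n η) :
    ∃ h1 : ℝ → ℝ, ContDiffOn ℝ 2 h1 (Set.Ici 0) ∧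
      (∀ z ∈ Set.Ici (0:ℝ),
        derivWithin (derivWithin h1 (Set.Ici 0)) (Set.Ici 0) z = qpot n η z * h1 z) ∧
      h1 0 = 1 ∧
      derivWithin h1 (Set.Ici 0) 0 = 0 ∧
      (∀ x ∈ Set.Ici (0:ℝ), 0 < h1 x ∧ 1 ≤ h1 x) ∧
      ∃ d1 : ℝ, 0 < d1 ∧
        Filter.Tendsto (fun x : ℝ => x ^ (-(pplus n)) * h1 x) Filter.atTop (nhds d1) := by
  obtain ⟨m, rfl⟩ : ∃ m, n = m + 1 := ⟨n - 1, by omega⟩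
  obtain ⟨hη2, hpos, hode, -, hlim⟩ := hη
  have hm3 : (3:ℝ) ≤ m := by exact_mod_cast (by omega : 3 ≤ m)
  have hκ : 0 < kap := by unfold kap; have := Real.pi_pos; positivity
  have hdel : del (m + 1) = ((m:ℝ) + 3) / m := by
    unfold del; push_cast; congr 1 <;> ring
  have hδ : del (m + 1) * m = m + 3 := by rw [hdel]; field_simp
  have hδ1 : 1 < del (m + 1) := by
    rw [hdel, one_lt_div (by linarith)]; linarith
  have hu : UniqueDiffOn ℝ (Ici (0:ℝ)) := uniqueDiffOn_Ici 0
  set e := derivWithin η (Ici 0) with he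
  have he1 : ContDiffOn ℝ 1 e (Ici 0) := hη2.derivWithin hu (by norm_num)
  have hce : ContinuousOn e (Ici 0) := he1.continuousOn
  have hc : ContinuousOn η (Ici 0) := hη2.continuousOn
  have hd : ∀ z, 0 < z → HasDerivAt η (e z) z := fun z hz =>
    ((hη2.differentiableOn (by norm_num) z hz.le).hasDerivWithinAt).hasDerivAt (Ici_mem_nhds hz)
  have hd' : ∀ z, 0 < z → HasDerivAt e ((2 * kap * z * η z + η z ^ 2) ^ (m + 1)) z := by
    intro z hz
    rw [← hode z hz.le]
    exact ((he1.differentiableOn (by norm_num) z hz.le).hasDerivWithinAt).hasDerivAt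
      (Ici_mem_nhds hz)
  obtain ⟨B, z1, hB, hz1, hq⟩ := profile_asymp hκ hδ1 hδ hc hce hd hd' hpos hlim
  have hqe : ∀ z, qpot (m + 1) η z =
      ((m : ℝ) + 1) * (2 * kap * z * η z + η z ^ 2) ^ m * (2 * kap * z + 2 * η z) := by
    intro z; unfold qpot; simp
  simp_rw [← hqe] at hq
  have hz10 : 0 < z1 := by linarith
  have hq0 : ∀ z, 0 < z → 0 < qpot (m + 1) η z := by
    intro z hz; have := hpos z hz.le; rw [hqe]; positivity
  have hq0' : ∀ z, 0 ≤ z → 0 ≤ qpot (m + 1) η z := by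
    intro z hz; have := hpos z hz; rw [hqe]; positivity
  have hqc : ContinuousOn (qpot (m + 1) η) (Ici 0) := by
    unfold qpot; fun_prop
  set a := ((m:ℝ) + 1) * del (m + 1) * (del (m + 1) + 1) with ha
  have ha0 : 0 < a := by positivity
  obtain ⟨hp1, hpa⟩ := pplus_props (p := pplus (m + 1)) ha0 (by
    unfold pplus; rw [ha]; push_cast; congr 3; ring)
  -- boundedness
  obtain ⟨M1, hM1⟩ := (isCompact_Icc (a := (0:ℝ)) (b := z1)).bddAbove_image
    (hqc.mono Icc_subset_Ici_self)
  have hqM : ∀ z, 0 ≤ z → qpot (m + 1) η z ≤ max M1 (a + B) := by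
    intro z hz
    by_cases h : z ≤ z1
    · exact (hM1 ⟨z, ⟨hz, h⟩, rfl⟩).trans (le_max_left _ _)
    · have h' : z1 ≤ z := (not_le.1 h).le
      have h2 := (abs_le.1 (hq z h')).2
      have h3 : B / z ≤ B := div_le_self hB (hz1.trans h')
      have h4 : qpot (m + 1) η z ≤ qpot (m + 1) η z * z ^ 2 :=
        le_mul_of_one_le_right (hq0' z hz) (one_le_pow₀ (hz1.trans h'))
      exact le_trans (by linarith) (le_max_right _ _)
  obtain ⟨h, h', hh0, hhp_zero, hhd, hhd', hhp_cont, hh1⟩ := lin_exists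
    (fun x => qpot (m + 1) η (max x 0))
    (hqc.comp_continuous (by fun_prop) (fun x => mem_Ici.2 (le_max_right _ _))) (max M1 (a + B))
    (fun x => hq0' _ (le_max_right _ _)) (fun x => hqM _ (le_max_right _ _))
  have hhd2 : ∀ x, 0 ≤ x → HasDerivAt h' (qpot (m + 1) η x * h x) x := by
    intro x hx
    have := hhd' x hx
    rwa [max_eq_left hx] at this
  have hdw : ∀ z ∈ Ici (0:ℝ), derivWithin h (Ici 0) z = h' z := fun z hz =>
    (hhd z).hasDerivWithinAt.derivWithin (hu z hz)
  have hdw' : ∀ z ∈ Ici (0:ℝ), derivWithin h' (Ici 0) z = qpot (m + 1) η z * h z := fun z hz =>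
    (hhd2 z hz).hasDerivWithinAt.derivWithin (hu z hz)
  have hhc : Continuous h := continuous_iff_continuousAt.2 fun x => (hhd x).continuousAt
  refine ⟨h, ?_, ?_, hh0, ?_, ?_, ?_⟩
  · rw [show (2 : WithTop ℕ∞) = 1 + 1 by norm_num, contDiffOn_succ_iff_derivWithin hu]
    refine ⟨fun x _ => (hhd x).differentiableAt.differentiableWithinAt, by simp, ?_⟩
    refine ContDiffOn.congr ?_ hdw
    rw [show (1 : WithTop ℕ∞) = 0 + 1 by norm_num, contDiffOn_succ_iff_derivWithin hu]
    refine ⟨fun x hx => (hhd2 x hx).differentiableAt.differentiableWithinAt, by simp, ?_⟩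
    refine ContDiffOn.congr ?_ hdw'
    rw [contDiffOn_zero]
    exact hqc.mul hhc.continuousOn
  · intro z hz
    rw [derivWithin_congr hdw (hdw z hz), hdw' z hz]
  · rw [hdw 0 (mem_Ici.2 le_rfl), hhp_zero]
  · intro x hx
    have := hh1 x hx
    exact ⟨by linarith, this⟩
  · obtain ⟨c, hc1, hc2⟩ := exists_hasDerivAt_eq_slope h' (fun x => qpot (m + 1) η x * h x) hz10
      hhp_cont.continuousOn (fun x hx => hhd2 x hx.1.le)
    have hs : 0 < h' z1 := by
      have h1 : 0 < qpot (m + 1) η c * h c :=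
        mul_pos (hq0 c hc1.1) (by have := hh1 c hc1.1.le; linarith)
      simp only [hhp_zero, sub_zero] at hc2
      rw [hc2] at h1
      exact (div_pos_iff_of_pos_right hz10).1 h1
    have hmono' : MonotoneOn h' (Ici z1) := monotone_of_deriv
      (fun z hz => hhd2 z (hz10.le.trans hz)) (fun z hz => mul_nonneg (hq0' z (hz10.le.trans hz))
        (by have := hh1 z (hz10.le.trans hz); linarith))
    set c0 := min (h' z1) (1 / z1) with hc0
    have hc0p : 0 < c0 := lt_min hs (by positivity)
    have hmono : MonotoneOn (fun z => h z - c0 * z) (Ici z1) := by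
      refine monotone_of_deriv (f' := fun z => h' z - c0 * 1)
        (fun z hz => (hhd z).sub ((hasDerivAt_id z).const_mul c0)) (fun z hz => ?_)
      have := hmono' (mem_Ici.2 le_rfl) hz hz
      have := min_le_left (h' z1) (1 / z1)
      linarith
    refine growth (q := qpot (m + 1) η) (h := h) (h' := h') hp1 hB hz1 hc0p ?_
      (fun z _ => hhd z) (fun z hz => hhd2 z (hz10.le.trans hz)) ?_
    · intro z hz
      rw [hpa]; exact hq z hz
    · intro z hz
      have h3 := hmono (mem_Ici.2 le_rfl) hz hz
      simp only at h3
      have h4 : c0 * z1 ≤ 1 := by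
        rw [← le_div_iff₀ hz10]; exact min_le_right _ _
      have := hh1 z1 hz10.le
      linarith
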